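/- For any (n+1)×n matrix P with entries in a commutative ring, any row indices 1 ≤ k₁ < k₂ < k₃ ≤ n+1 and any column index 1 ≤ l ≤ n, one has det(P^{k₁}) · det(P^{k₂,k₃}_{l}) − det(P^{k₂}) · det(P^{k₁,k₃}_{l}) + det(P^{k₃}) · det(P^{k₁,k₂}_{l}) = 0. -/

import Mathlib

namespace ASMDPP

/-- The determinant of the square submatrix of `M` whose rows and columns are those
listed (in order) in `rows` and `cols` (always lists of the same length here). -/
def detOn {R : Type*} [CommRing R] (M : ℕ → ℕ → R) (rows cols : List ℕ) : R :=
  Matrix.det (Matrix.of fun i j : Fin rows.length => M (rows.getD i 0) (cols.getD j 0))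

/-!
Border the `(n + 1) × n` matrix by a column `b` to get a square matrix `A`. By cofactor
expansion the minors in the identity are, up to sign, the determinants obtained from `A` by
putting one unit vector in column `b`, or one in column `b` and another in the deleted column
`a`. The three products carry the same sign, so what remains is a three-term Plücker relation
between determinants of `A` with columns `a` and `b` replaced by given vectors `x`, `y`, `z`.

For that relation, let `M` be `A` with `y` in column `a` and `z` in column `b`. Cramer's rule
writes `det M • x` as a combination of the columns of `M`. Put both sides into column `b` of `A`
and take determinants: the columns that `M` shares with `A` contribute zero, which leaves only
`y` and `z`.
-/

section Determinants

open Matrix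

variable {R m n m' n' : Type*}

lemma submatrix_updateCol_of_injective [DecidableEq n] [DecidableEq n'] (A : Matrix m n R)
    (f : m' → m) {g : n' → n} (hg : Function.Injective g) (j : n') (x : m → R) :
    (A.updateCol (g j) x).submatrix f g = (A.submatrix f g).updateCol j (x ∘ f) := by
  ext r c
  simp [updateCol_apply, hg.eq_iff]

variable [CommRing R] [Fintype n] [DecidableEq n]

lemma det_updateCol_updateCol_swap (A : Matrix n n R) {a b : n} (hab : a ≠ b) (x y : n → R) :
    ((A.updateCol a y).updateCol b x).det = -((A.updateCol a x).updateCol b y).det := by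
  have hswap : (A.updateCol a y).updateCol b x =
      ((A.updateCol a x).updateCol b y).submatrix id (Equiv.swap a b) := by
    ext i j
    rcases eq_or_ne j a with rfl | hja
    · simp [hab]
    rcases eq_or_ne j b with rfl | hjb
    · simp [hab]
    · simp [hja, hjb, Equiv.swap_apply_of_ne_of_ne]
  rw [hswap, det_permute', Equiv.Perm.sign_swap hab]
  simp

lemma det_mul_det_updateCol_eq_sum (M B : Matrix n n R) (j : n) (x : n → R) :
    M.det * (B.updateCol j x).det =
      ∑ c, (M.updateCol c x).det * (B.updateCol j (M.col c)).det := by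
  have hcramer : M.det • x = ∑ c, M.cramer x c • M.col c := by
    simp [← mulVec_cramer, mulVec_eq_sum, col_def]
  calc
    M.det * (B.updateCol j x).det = B.cramer (M.det • x) j := by
      rw [map_smul, Pi.smul_apply, smul_eq_mul, cramer_apply]
    _ = ∑ c, (M.updateCol c x).det * (B.updateCol j (M.col c)).det := by
      simp only [hcramer, map_sum, map_smul, Finset.sum_apply, Pi.smul_apply, smul_eq_mul]
      simp only [cramer_apply]

lemma det_updateCol_three_term (A : Matrix n n R) {a b : n} (hab : a ≠ b) (x y z : n → R) :
    (A.updateCol b x).det * ((A.updateCol a y).updateCol b z).det -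
      (A.updateCol b y).det * ((A.updateCol a x).updateCol b z).det +
      (A.updateCol b z).det * ((A.updateCol a x).updateCol b y).det = 0 := by
  let M := (A.updateCol a y).updateCol b z
  have hcol_a : M.col a = y := by ext; simp [M, hab]
  have hcol_b : M.col b = z := by ext; simp [M]
  have hM_a : M.updateCol a x = (A.updateCol a x).updateCol b z := by
    simp only [M, updateCol_comm _ hab, updateCol_idem]
  have hM_b : M.updateCol b x = (A.updateCol a y).updateCol b x := updateCol_idem _ _ _ _
  have hvanish (c : n) (hc : c ≠ a ∧ c ≠ b) :
      (M.updateCol c x).det * (A.updateCol b (M.col c)).det = 0 := by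
    have hcol : M.col c = fun r => A r c := by ext; simp [M, hc]
    rw [hcol, det_updateCol_eq_zero hc.2, mul_zero]
  have hexchange := det_mul_det_updateCol_eq_sum M A b x
  rw [Fintype.sum_eq_add a b hab hvanish, hcol_a, hcol_b, hM_a, hM_b,
    det_updateCol_updateCol_swap A hab x y] at hexchange
  linear_combination hexchange

end Determinants

section Minors

open Matrix

variable {R : Type*} [CommRing R] {N : ℕ}

lemma det_updateCol_single (A : Matrix (Fin (N + 1)) (Fin (N + 1)) R) (i j : Fin (N + 1)) :
    (A.updateCol j (Pi.single i 1)).det =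
      (-1) ^ (i + j : ℕ) * (A.submatrix i.succAbove j.succAbove).det := by
  rw [← adjugate_fin_succ_eq_det_submatrix, ← cramer_apply, cramer_eq_adjugate_mulVec,
    mulVec_single_one, col_apply]

lemma det_updateCol_single_updateCol_single (A : Matrix (Fin (N + 2)) (Fin (N + 2)) R)
    (i a : Fin (N + 1)) (k b : Fin (N + 2)) :
    ((A.updateCol (b.succAbove a) (Pi.single (k.succAbove i) 1)).updateCol b
        (Pi.single k 1)).det =
      (-1) ^ (k + b + i + a : ℕ) *
        (A.submatrix (k.succAbove ∘ i.succAbove) (b.succAbove ∘ a.succAbove)).det := by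
  have hsingle : (Pi.single (k.succAbove i) 1 : Fin (N + 2) → R) ∘ k.succAbove =
      Pi.single i 1 :=
    Function.update_comp_eq_of_injective _ Fin.succAbove_right_injective _ _
  rw [det_updateCol_single, submatrix_updateCol_of_injective _ _ Fin.succAbove_right_injective,
    hsingle, det_updateCol_single, submatrix_submatrix]
  ring

lemma det_submatrix_succAbove_three_term (A : Matrix (Fin (N + 2)) (Fin (N + 2)) R)
    (a : Fin (N + 1)) (b : Fin (N + 2)) {i j : Fin (N + 1)} {k : Fin (N + 2)} (hij : i < j)
    (hjk : j.castSucc < k) :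
    (A.submatrix i.castSucc.succAbove b.succAbove).det *
        (A.submatrix (k.succAbove ∘ j.succAbove) (b.succAbove ∘ a.succAbove)).det -
      (A.submatrix j.castSucc.succAbove b.succAbove).det *
        (A.submatrix (k.succAbove ∘ i.succAbove) (b.succAbove ∘ a.succAbove)).det +
      (A.submatrix k.succAbove b.succAbove).det *
        (A.submatrix (j.castSucc.succAbove ∘ i.succAbove) (b.succAbove ∘ a.succAbove)).det =
      0 := by
  have hik : i.castSucc < k := (Fin.castSucc_lt_castSucc_iff.2 hij).trans hjk
  have hminor {p : Fin (N + 1)} {q : Fin (N + 2)} (hpq : p.castSucc < q) :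
      ((A.updateCol (b.succAbove a) (Pi.single p.castSucc 1)).updateCol b (Pi.single q 1)).det =
        (-1) ^ (q + b + p + a : ℕ) *
          (A.submatrix (q.succAbove ∘ p.succAbove) (b.succAbove ∘ a.succAbove)).det := by
    rw [← Fin.succAbove_of_castSucc_lt q p hpq, det_updateCol_single_updateCol_single]
  have hthree := det_updateCol_three_term A (Fin.succAbove_ne b a)
    (Pi.single i.castSucc 1) (Pi.single j.castSucc 1) (Pi.single k 1)
  rw [hminor hjk, hminor hik, hminor (Fin.castSucc_lt_castSucc_iff.2 hij)] at hthree
  simp only [det_updateCol_single, Fin.val_castSucc, pow_add] at hthree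
  have hsign : IsUnit ((-1 : R) ^ (i + b + (k + b + j + a) : ℕ)) := isUnit_one.neg.pow _
  refine hsign.mul_right_eq_zero.1 ?_
  linear_combination hthree

lemma det_submatrix_succAbove_id_three_term (Q : Matrix (Fin (N + 2)) (Fin (N + 1)) R)
    (a : Fin (N + 1)) {i j : Fin (N + 1)} {k : Fin (N + 2)} (hij : i < j)
    (hjk : j.castSucc < k) :
    (Q.submatrix i.castSucc.succAbove id).det *
        (Q.submatrix (k.succAbove ∘ j.succAbove) a.succAbove).det -
      (Q.submatrix j.castSucc.succAbove id).det *
        (Q.submatrix (k.succAbove ∘ i.succAbove) a.succAbove).det +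
      (Q.submatrix k.succAbove id).det *
        (Q.submatrix (j.castSucc.succAbove ∘ i.succAbove) a.succAbove).det =
      0 :=
  det_submatrix_succAbove_three_term (of fun r => Fin.cons 0 (Q r)) a 0 hij hjk

end Minors

section Lists

variable {m : ℕ}

lemma filter_ne_finRange (k : Fin (m + 1)) :
    (List.finRange (m + 1)).filter (· ≠ k) = List.ofFn k.succAbove :=
  ((List.sortedLT_finRange _).pairwise.filter _).sortedLT.eq_of_mem_iff
    (Fin.strictMono_succAbove k).sortedLT_ofFn fun x => by simp [Fin.exists_succAbove_eq_iff]

variable {α : Type*} [DecidableEq α]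

lemma filter_ne_ofFn {f : Fin (m + 1) → α} (hf : Function.Injective f) (k : Fin (m + 1)) :
    (List.ofFn f).filter (· ≠ f k) = List.ofFn (f ∘ k.succAbove) := by
  simp only [List.ofFn_eq_map (f := f), List.filter_map, Function.comp_def, hf.ne_iff,
    filter_ne_finRange, List.map_ofFn]

lemma filter_ne_and_ne_ofFn {f : Fin (m + 2) → α} (hf : Function.Injective f)
    (i : Fin (m + 1)) (k : Fin (m + 2)) :
    (List.ofFn f).filter (fun x => x ≠ f (k.succAbove i) ∧ x ≠ f k) =
      List.ofFn (f ∘ k.succAbove ∘ i.succAbove) := by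
  have hfilter := filter_ne_ofFn (hf.comp (Fin.succAbove_right_injective (p := k))) i
  rw [← filter_ne_ofFn hf k, List.filter_filter] at hfilter
  simpa [Function.comp_assoc] using hfilter

lemma range'_one_eq_ofFn (m : ℕ) : List.range' 1 m = List.ofFn fun i : Fin m => (i : ℕ) + 1 := by
  apply List.ext_getElem <;> simp [add_comm]

lemma filter_ne_range'_one (k : Fin (m + 1)) :
    (List.range' 1 (m + 1)).filter (· ≠ (k : ℕ) + 1) =
      List.ofFn fun i => (k.succAbove i : ℕ) + 1 := by
  rw [range'_one_eq_ofFn]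
  exact filter_ne_ofFn (Nat.succ_injective.comp Fin.val_injective) k

lemma filter_ne_and_ne_range'_one {i : Fin (m + 1)} {k : Fin (m + 2)}
    (hik : i.castSucc < k) :
    (List.range' 1 (m + 2)).filter
        (fun r => r ≠ (i.castSucc : ℕ) + 1 ∧ r ≠ (k : ℕ) + 1) =
      List.ofFn fun r => (k.succAbove (i.succAbove r) : ℕ) + 1 := by
  rw [range'_one_eq_ofFn, ← Fin.succAbove_of_castSucc_lt k i hik]
  exact filter_ne_and_ne_ofFn (Nat.succ_injective.comp Fin.val_injective) i k

end Lists

lemma detOn_ofFn {R : Type*} [CommRing R] {m : ℕ} (P : ℕ → ℕ → R) (f g : Fin m → ℕ) :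
    detOn P (List.ofFn f) (List.ofFn g) = (Matrix.of fun i j => P (f i) (g j)).det := by
  have hlen := List.length_ofFn (f := f)
  rw [detOn, ← Matrix.det_submatrix_equiv_self (finCongr hlen.symm)]
  congr 1
  ext i j
  simp

/-- A further form of the Desnanot–Jacobi identity, for an `(n+1) × n` matrix `P` with
rows indexed by `1, …, n+1` and columns indexed by `1, …, n`: `P^{i}` deletes row `i`,
and `P^{i,j}_{l}` deletes rows `i`, `j` and column `l`. -/
theorem desnanot_jacobi_mixed {R : Type*} [CommRing R] (n : ℕ)
    (P : ℕ → ℕ → R) (k₁ k₂ k₃ l : ℕ) (h₁ : 1 ≤ k₁) (h₁₂ : k₁ < k₂) (h₂₃ : k₂ < k₃)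
    (h₃ : k₃ ≤ n + 1) (hl₁ : 1 ≤ l) (hl : l ≤ n) :
    detOn P ((List.range' 1 (n + 1)).filter (· ≠ k₁)) (List.range' 1 n) *
      detOn P ((List.range' 1 (n + 1)).filter (fun r => r ≠ k₂ ∧ r ≠ k₃))
        ((List.range' 1 n).filter (· ≠ l)) -
    detOn P ((List.range' 1 (n + 1)).filter (· ≠ k₂)) (List.range' 1 n) *
      detOn P ((List.range' 1 (n + 1)).filter (fun r => r ≠ k₁ ∧ r ≠ k₃))
        ((List.range' 1 n).filter (· ≠ l)) +
    detOn P ((List.range' 1 (n + 1)).filter (· ≠ k₃)) (List.range' 1 n) *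
      detOn P ((List.range' 1 (n + 1)).filter (fun r => r ≠ k₁ ∧ r ≠ k₂))
        ((List.range' 1 n).filter (· ≠ l)) = 0 := by
  obtain ⟨N, rfl⟩ : ∃ N, n = N + 1 := ⟨n - 1, by omega⟩
  obtain ⟨a, rfl⟩ : ∃ a : Fin (N + 1), l = a + 1 := ⟨⟨l - 1, by omega⟩, by simp; omega⟩
  obtain ⟨i, rfl⟩ : ∃ i : Fin (N + 1), k₁ = i.castSucc + 1 :=
    ⟨⟨k₁ - 1, by omega⟩, by simp; omega⟩
  obtain ⟨j, rfl⟩ : ∃ j : Fin (N + 1), k₂ = j.castSucc + 1 :=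
    ⟨⟨k₂ - 1, by omega⟩, by simp; omega⟩
  obtain ⟨k, rfl⟩ : ∃ k : Fin (N + 2), k₃ = k + 1 := ⟨⟨k₃ - 1, by omega⟩, by simp; omega⟩
  have hij : i.castSucc < j.castSucc := by omega
  have hjk : j.castSucc < k := by omega
  rw [filter_ne_range'_one i.castSucc, filter_ne_range'_one j.castSucc, filter_ne_range'_one k,
    filter_ne_range'_one a, range'_one_eq_ofFn, filter_ne_and_ne_range'_one hij,
    filter_ne_and_ne_range'_one hjk, filter_ne_and_ne_range'_one (hij.trans hjk)]
  simp only [detOn_ofFn]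
  exact det_submatrix_succAbove_id_three_term
    (Matrix.of fun (r : Fin (N + 2)) (c : Fin (N + 1)) => P (r + 1) (c + 1)) a
    (Fin.castSucc_lt_castSucc_iff.1 hij) hjk

end ASMDPP
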